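/- Let n ≥ 2. For any two transpositions σ = (i j) and ρ = (k l) in S_n with {i,j} ∩ {k,l} = ∅ and any x ∈ S_n, one has c(σ, x) + c(σ, ρ·x) + c(ρ, x) + c(ρ, σ·x) = 1 in Z/2Z. (This is the algebraic form of the square rule (Sq) for the induced sign assignment in the disjoint-support case.) -/

import Mathlib

open Equiv
open scoped Classical

/-- Generator `z` as an element of the free group. -/
def zF (n : ℕ) : FreeGroup (Fin (n-1) ⊕ Unit) := FreeGroup.of (Sum.inr ())

/-- Generator `τ̃ᵢ` as an element of the free group. -/
def tF (n : ℕ) (i : Fin (n-1)) : FreeGroup (Fin (n-1) ⊕ Unit) := FreeGroup.of (Sum.inl i)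

/-- Relations of the spin extension of the symmetric group. -/
def spinRels (n : ℕ) : Set (FreeGroup (Fin (n-1) ⊕ Unit)) :=
  {zF n * zF n} ∪
  {w | ∃ i : Fin (n-1), w = zF n * tF n i * (tF n i * zF n)⁻¹} ∪
  {w | ∃ i : Fin (n-1), w = tF n i * tF n i * (zF n)⁻¹} ∪
  {w | ∃ i j : Fin (n-1), 1 < |(i : ℤ) - (j : ℤ)| ∧ w = tF n i * tF n j * (zF n * tF n j * tF n i)⁻¹} ∪
  {w | ∃ i j : Fin (n-1), (j : ℕ) = (i : ℕ) + 1 ∧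
        w = tF n i * tF n j * tF n i * (tF n j * tF n i * tF n j)⁻¹}

/-- The spin extension `S̃ₙ` of the symmetric group, as a presented group. -/
abbrev SpinSym (n : ℕ) := PresentedGroup (spinRels n)

/-- The central element `z` of `S̃ₙ`. -/
def zt (n : ℕ) : SpinSym n := PresentedGroup.of (Sum.inr ())

/-- The generator `τ̃ᵢ` of `S̃ₙ`. -/
def tt (n : ℕ) (i : Fin (n-1)) : SpinSym n := PresentedGroup.of (Sum.inl i)

/-- `i` as an element of `Fin n`. -/
def finL (n : ℕ) (i : Fin (n-1)) : Fin n := ⟨i, by have := i.2; omega⟩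

/-- `i+1` as an element of `Fin n`. -/
def finR (n : ℕ) (i : Fin (n-1)) : Fin n := ⟨(i : ℕ) + 1, by have := i.2; omega⟩

/-- `τ̃ₖ` for a natural number index, `1` out of range. -/
def ttN (n : ℕ) (k : ℕ) : SpinSym n := if h : k < n - 1 then tt n ⟨k, h⟩ else 1

/-- For `i ≤ j`, the word `τ̃ᵢ·τ̃ᵢ₊₁⋯τ̃ⱼ₋₂·τ̃ⱼ₋₁·τ̃ⱼ₋₂⋯τ̃ᵢ₊₁·τ̃ᵢ` (equal to `1` when `i = j`). -/
def ttilCore (n i j : ℕ) : SpinSym n :=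
  (((List.range' i (j - i)) ++ (List.range' i (j - 1 - i)).reverse).map (ttN n)).prod

/-- The lifted transpositions `τ̃_{i,j}`, with `τ̃_{j,i} = z·τ̃_{i,j}` for `i < j`,
and `τ̃_{k,k} = 1`. -/
def ttil (n i j : ℕ) : SpinSym n := if j < i then zt n * ttilCore n j i else ttilCore n i j

/-- `i` is the sequence of indices of a factorization of `x` as a product of
transpositions `t_{i_0,0} ⋯ t_{i_{n-1},n-1}` with `i_k ≤ k`. -/
def IsFactorization (n : ℕ) (x : Equiv.Perm (Fin n)) (i : Fin n → Fin n) : Prop :=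
  (∀ k, i k ≤ k) ∧ x = ((List.finRange n).map (fun k => Equiv.swap (i k) k)).prod

/-- The section `s : Sₙ → S̃ₙ`, defined from the unique factorization
`x = t_{i_0,0} ⋯ t_{i_{n-1},n-1}` by `s x = τ̃_{i_0,0} ⋯ τ̃_{i_{n-1},n-1}`. -/
noncomputable def sec (n : ℕ) (x : Equiv.Perm (Fin n)) : SpinSym n :=
  if h : ∃ i, IsFactorization n x i then
    ((List.finRange n).map (fun k => ttil n (h.choose k).val k.val)).prod
  else 1

/-- The `2`-cocycle `c : Sₙ × Sₙ → ℤ/2ℤ` defined by `s(x)·s(y) = z^{c(x,y)}·s(x·y)`. -/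
noncomputable def coc (n : ℕ) (x y : Equiv.Perm (Fin n)) : ZMod 2 :=
  if sec n x * sec n y = sec n (x * y) then 0 else 1

/-! ### The Coxeter presentation of the symmetric group -/

/-- The descending product `t (i + d - 1) * ⋯ * t (i + 1) * t i`. -/
def descProd {G : Type*} [Group G] (t : ℕ → G) (i : ℕ) : ℕ → G
  | 0 => 1
  | d + 1 => t (i + d) * descProd t i d

section Coxeter

variable {G : Type*} [Group G] {t : ℕ → G}

lemma descProd_succ_right (i d : ℕ) :
    descProd t i (d + 1) = descProd t (i + 1) d * t i := by
  induction d with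
  | zero => simp [descProd]
  | succ d ih =>
    rw [descProd, ih, descProd, ← mul_assoc, Nat.add_right_comm i 1 d, Nat.add_assoc i d 1]

lemma commute_descProd {i d : ℕ} {x : G}
    (h : ∀ b, i ≤ b → b < i + d → Commute (t b) x) : Commute (descProd t i d) x := by
  induction d with
  | zero => exact Commute.one_left x
  | succ d ih =>
    exact (h _ (by omega) (by omega)).mul_left (ih fun b hb hb' => h b hb (by omega))

/-- Moving a generator through a descending product whose range contains it and its
predecessor lowers its index by one. -/
lemma descProd_mul_of_lt {N : ℕ}
    (hcomm : ∀ a b, a + 1 < b → b < N → Commute (t a) (t b))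
    (hbraid : ∀ a, a + 1 < N → t a * t (a + 1) * t a = t (a + 1) * t a * t (a + 1))
    (i k d : ℕ) (h : i + (k + 2 + d) ≤ N) :
    descProd t i (k + 2 + d) * t (i + k + 1) = t (i + k) * descProd t i (k + 2 + d) := by
  induction d with
  | zero =>
    have hc : Commute (descProd t i k) (t (i + k + 1)) :=
      commute_descProd fun b _ hb' => hcomm _ _ (by omega) (by omega)
    have hb := hbraid (i + k) (by omega)
    simp only [descProd]
    rw [← Nat.add_assoc i k 1, mul_assoc, mul_assoc, hc.eq, ← mul_assoc, ← mul_assoc, ← hb]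
    simp only [mul_assoc]
  | succ d ih =>
    have hc : Commute (t (i + k)) (t (i + (k + 2 + d))) := hcomm _ _ (by omega) (by omega)
    rw [← Nat.add_assoc (k + 2) d 1, descProd, mul_assoc, ih (by omega), ← mul_assoc, ← hc.eq,
      mul_assoc]

/-- In a group generated by elements satisfying the Coxeter relations of type `A`, descending
products represent all cosets of the subgroup omitting the last generator. -/
lemma exists_eq_mul_descProd {N : ℕ} (hsq : ∀ a < N, t a * t a = 1)
    (hcomm : ∀ a b, a + 1 < b → b < N → Commute (t a) (t b))
    (hbraid : ∀ a, a + 1 < N → t a * t (a + 1) * t a = t (a + 1) * t a * t (a + 1))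
    {m : ℕ} (hm : m < N) {g : G} (hg : g ∈ Subgroup.closure (t '' Set.Iio (m + 1))) :
    ∃ i d, i + d = m + 1 ∧ ∃ h ∈ Subgroup.closure (t '' Set.Iio m), g = h * descProd t i d := by
  have step : ∀ g a, a < m + 1 →
      (∃ i d, i + d = m + 1 ∧ ∃ h ∈ Subgroup.closure (t '' Set.Iio m), g = h * descProd t i d) →
      ∃ i d, i + d = m + 1 ∧
        ∃ h ∈ Subgroup.closure (t '' Set.Iio m), g * t a = h * descProd t i d := by
    rintro _ a ha ⟨i, d, hid, h, hh, rfl⟩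
    have hmem : ∀ b < m, t b ∈ Subgroup.closure (t '' Set.Iio m) := fun b hb =>
      Subgroup.subset_closure ⟨b, hb, rfl⟩
    rcases lt_trichotomy a i with hai | rfl | hai
    · rcases Nat.lt_or_ge (a + 1) i with hai' | hai'
      · refine ⟨i, d, hid, h * t a, mul_mem hh (hmem a (by omega)), ?_⟩
        have hc : Commute (descProd t i d) (t a) :=
          commute_descProd fun b hb _ => (hcomm _ _ (by omega) (by omega)).symm
        rw [mul_assoc, hc.eq, mul_assoc]
      · obtain rfl : i = a + 1 := by omega
        exact ⟨a, d + 1, by omega, h, hh, by rw [descProd_succ_right, mul_assoc]⟩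
    · obtain ⟨d, rfl⟩ : ∃ e, d = e + 1 := ⟨d - 1, by omega⟩
      refine ⟨a + 1, d, by omega, h, hh, ?_⟩
      rw [descProd_succ_right, mul_assoc, mul_assoc, hsq a (by omega), mul_one]
    · obtain ⟨k, rfl⟩ := Nat.exists_eq_add_of_lt hai
      obtain ⟨e, rfl⟩ : ∃ e, d = k + 2 + e := ⟨d - (k + 2), by omega⟩
      refine ⟨i, _, hid, h * t (i + k), mul_mem hh (hmem _ (by omega)), ?_⟩
      rw [mul_assoc, descProd_mul_of_lt hcomm hbraid i k e (by omega), mul_assoc]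
  induction hg using Subgroup.closure_induction_right with
  | one => exact ⟨m + 1, 0, rfl, 1, one_mem _, by simp [descProd]⟩
  | mul_right x _ y hy ih =>
    obtain ⟨a, ha, rfl⟩ := hy
    exact step x a ha ih
  | mul_inv_cancel x _ y hy ih =>
    obtain ⟨a, ha, rfl⟩ := hy
    rw [inv_eq_of_mul_eq_one_left (hsq a (lt_of_lt_of_le ha hm))]
    exact step x a ha ih

/-- A group generated by elements satisfying the Coxeter relations of type `A` acts faithfully
as adjacent transpositions. -/
lemma eq_one_of_map_swap_eq_one {α : Type*} [DecidableEq α] {e : ℕ → α} {N : ℕ}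
    (he : Set.InjOn e (Set.Iic N)) (hsq : ∀ a < N, t a * t a = 1)
    (hcomm : ∀ a b, a + 1 < b → b < N → Commute (t a) (t b))
    (hbraid : ∀ a, a + 1 < N → t a * t (a + 1) * t a = t (a + 1) * t a * t (a + 1))
    (φ : G →* Equiv.Perm α) (hφ : ∀ a < N, φ (t a) = Equiv.swap (e a) (e (a + 1)))
    (m : ℕ) (hm : m ≤ N) (g : G) (hg : g ∈ Subgroup.closure (t '' Set.Iio m)) (h1 : φ g = 1) :
    g = 1 := by
  induction m generalizing g with
  | zero => simpa using hg
  | succ m ih =>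
    obtain ⟨i, d, hid, h, hh, rfl⟩ := exists_eq_mul_descProd hsq hcomm hbraid hm hg
    have hfix : φ h (e (m + 1)) = e (m + 1) := by
      clear h1 hg
      induction hh using Subgroup.closure_induction with
      | mem y hy =>
        obtain ⟨a, ha, rfl⟩ := hy
        have ha : a < m := ha
        rw [hφ a (by omega)]
        refine Equiv.swap_apply_of_ne_of_ne ?_ ?_ <;>
        · intro hc
          have := he (by simp; omega) (by simp; omega) hc
          omega
      | one => simp
      | mul x y _ _ hx hy => rw [map_mul, Equiv.Perm.mul_apply, hy, hx]
      | inv x _ hx => rw [map_inv, Equiv.Perm.inv_eq_iff_eq, hx]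
    have hdesc : ∀ c ≤ d, φ (descProd t i c) (e i) = e (i + c) := by
      intro c hc
      induction c with
      | zero => simp [descProd]
      | succ c ihc =>
        rw [descProd, map_mul, Equiv.Perm.mul_apply, ihc (by omega), hφ _ (by omega),
          Equiv.swap_apply_left, Nat.add_assoc]
    have hei : e i = e (m + 1) := by
      have h2 := congrArg (fun p : Equiv.Perm α => p (e i)) h1
      simpa [hdesc d le_rfl, hid, hfix, eq_comm] using h2
    have hi : i = m + 1 := he (by simp; omega) (by simp; omega) hei
    obtain rfl : d = 0 := by omega
    rw [descProd, mul_one] at h1 ⊢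
    exact ih (by omega) h hh h1

end Coxeter

/-! ### Relations and homomorphisms -/

section Relations

variable {n : ℕ}

lemma mk_eq_of_mem {u v : FreeGroup (Fin (n - 1) ⊕ Unit)} (h : u * v⁻¹ ∈ spinRels n) :
    PresentedGroup.mk (spinRels n) u = PresentedGroup.mk (spinRels n) v := by
  have h1 : PresentedGroup.mk (spinRels n) (u * v⁻¹) = 1 :=
    (QuotientGroup.eq_one_iff _).2 (Subgroup.subset_normalClosure h)
  rwa [map_mul, map_inv, mul_inv_eq_one] at h1

lemma zt_mul_zt : zt n * zt n = 1 :=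
  mk_eq_of_mem (u := zF n * zF n) (v := 1) (by simp [spinRels])

lemma zt_mul_tt (i : Fin (n - 1)) : zt n * tt n i = tt n i * zt n :=
  mk_eq_of_mem (u := zF n * tF n i) (v := tF n i * zF n)
    (Or.inl <| Or.inl <| Or.inl <| Or.inr ⟨i, rfl⟩)

lemma tt_mul_tt (i : Fin (n - 1)) : tt n i * tt n i = zt n :=
  mk_eq_of_mem (u := tF n i * tF n i) (v := zF n) (Or.inl <| Or.inl <| Or.inr ⟨i, rfl⟩)

lemma tt_mul_tt_of_lt {i j : Fin (n - 1)} (h : (i : ℕ) + 1 < j) :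
    tt n i * tt n j = zt n * tt n j * tt n i :=
  mk_eq_of_mem (u := tF n i * tF n j) (v := zF n * tF n j * tF n i)
    (Or.inl <| Or.inr ⟨i, j, by rw [lt_abs]; omega, rfl⟩)

lemma tt_braid {i j : Fin (n - 1)} (h : (j : ℕ) = i + 1) :
    tt n i * tt n j * tt n i = tt n j * tt n i * tt n j :=
  mk_eq_of_mem (u := tF n i * tF n j * tF n i) (v := tF n j * tF n i * tF n j)
    (Or.inr ⟨i, j, h, rfl⟩)

lemma zt_mem_center : zt n ∈ Subgroup.center (SpinSym n) := by
  rw [Subgroup.mem_center_iff]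
  intro g
  have hg : g ∈ Subgroup.centralizer {zt n} := by
    refine PresentedGroup.generated_by _ _ (fun j => ?_) g
    rw [Subgroup.mem_centralizer_singleton_iff]
    rcases j with i | ⟨⟩
    · exact (zt_mul_tt i).symm
    · rfl
  exact Subgroup.mem_centralizer_singleton_iff.1 hg

/-- The homomorphism out of `S̃ₙ` given by images of the generators satisfying the relations. -/
def spinLift {K : Type*} [Group K] (f : Fin (n - 1) → K) (w : K) (hw : w * w = 1)
    (hz : ∀ i, w * f i = f i * w) (hsq : ∀ i, f i * f i = w)
    (hcomm : ∀ i j : Fin (n - 1), 1 < |(i : ℤ) - (j : ℤ)| → f i * f j = w * f j * f i)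
    (hbraid : ∀ i j : Fin (n - 1), (j : ℕ) = (i : ℕ) + 1 → f i * f j * f i = f j * f i * f j) :
    SpinSym n →* K :=
  PresentedGroup.toGroup (f := Sum.elim f fun _ => w) (by
    rintro r ((((rfl | ⟨i, rfl⟩) | ⟨i, rfl⟩) | ⟨i, j, h, rfl⟩) | ⟨i, j, h, rfl⟩)
    · simpa [zF] using hw
    · simpa only [zF, tF, map_mul, map_inv, FreeGroup.lift_apply_of, Sum.elim_inl, Sum.elim_inr,
        mul_inv_eq_one] using hz i
    · simpa only [zF, tF, map_mul, map_inv, FreeGroup.lift_apply_of, Sum.elim_inl, Sum.elim_inr,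
        mul_inv_eq_one] using hsq i
    · simpa only [zF, tF, map_mul, map_inv, FreeGroup.lift_apply_of, Sum.elim_inl, Sum.elim_inr,
        mul_inv_eq_one] using hcomm i j h
    · simpa only [zF, tF, map_mul, map_inv, FreeGroup.lift_apply_of, Sum.elim_inl, Sum.elim_inr,
        mul_inv_eq_one] using hbraid i j h)

lemma spinLift_tt {K : Type*} [Group K] (f : Fin (n - 1) → K) (w : K) (hw : w * w = 1)
    (hz : ∀ i, w * f i = f i * w) (hsq : ∀ i, f i * f i = w)
    (hcomm : ∀ i j : Fin (n - 1), 1 < |(i : ℤ) - (j : ℤ)| → f i * f j = w * f j * f i)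
    (hbraid : ∀ i j : Fin (n - 1), (j : ℕ) = (i : ℕ) + 1 → f i * f j * f i = f j * f i * f j)
    (i : Fin (n - 1)) : spinLift f w hw hz hsq hcomm hbraid (tt n i) = f i := by
  simp [spinLift, tt]

lemma spinLift_zt {K : Type*} [Group K] (f : Fin (n - 1) → K) (w : K) (hw : w * w = 1)
    (hz : ∀ i, w * f i = f i * w) (hsq : ∀ i, f i * f i = w)
    (hcomm : ∀ i j : Fin (n - 1), 1 < |(i : ℤ) - (j : ℤ)| → f i * f j = w * f j * f i)
    (hbraid : ∀ i j : Fin (n - 1), (j : ℕ) = (i : ℕ) + 1 → f i * f j * f i = f j * f i * f j) :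
    spinLift f w hw hz hsq hcomm hbraid (zt n) = w := by
  simp [spinLift, zt]

/-- Recursion for the lifted transpositions exchanging non-adjacent points. -/
lemma ttilCore_succ_succ (i d : ℕ) :
    ttilCore n i (i + d + 2) = ttN n i * ttilCore n (i + 1) (i + d + 2) * ttN n i := by
  have h1 : i + d + 2 - i = (d + 1) + 1 := by omega
  have h2 : i + d + 2 - 1 - i = d + 1 := by omega
  have h3 : i + d + 2 - (i + 1) = d + 1 := by omega
  have h4 : i + d + 2 - 1 - (i + 1) = d := by omega
  rw [ttilCore, ttilCore, h1, h2, h3, h4, List.range'_succ (s := i) (n := d + 1),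
    List.range'_succ (s := i) (n := d)]
  simp [-List.map_reverse, mul_assoc]

lemma ttilCore_succ (i : ℕ) : ttilCore n i (i + 1) = ttN n i := by
  simp [ttilCore]

/-- Two adjacent transpositions satisfy the braid relation. -/
lemma swap_braid {α : Type*} [DecidableEq α] {a b c : α} (hab : a ≠ b) (hac : a ≠ c)
    (hbc : b ≠ c) : Equiv.swap a b * Equiv.swap b c * Equiv.swap a b =
      Equiv.swap b c * Equiv.swap a b * Equiv.swap b c := by
  rw [Equiv.swap_mul_swap_mul_swap hab hac, Equiv.swap_comm a b, Equiv.swap_comm b c,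
    Equiv.swap_mul_swap_mul_swap hbc.symm hac.symm, Equiv.swap_comm]

lemma finL_ne_finR (i : Fin (n - 1)) : finL n i ≠ finR n i := by
  simp [finL, finR, Fin.ext_iff]

/-- The projection `S̃ₙ → Sₙ`. -/
def spinProj (n : ℕ) : SpinSym n →* Equiv.Perm (Fin n) :=
  spinLift (fun i => Equiv.swap (finL n i) (finR n i)) 1 (by simp) (by simp) (by simp)
    (by
      intro i j h
      rw [lt_abs] at h
      rw [one_mul]
      refine (Equiv.Perm.Disjoint.commute ?_).eq
      rw [Equiv.Perm.disjoint_iff_disjoint_support,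
        Equiv.Perm.support_swap (finL_ne_finR i), Equiv.Perm.support_swap (finL_ne_finR j)]
      simp [finL, finR, Fin.ext_iff]
      omega)
    (by
      intro i j h
      have hij : finL n j = finR n i := Fin.ext h
      have h1 := finL_ne_finR j
      rw [hij] at h1 ⊢
      exact swap_braid (finL_ne_finR i) (by simp [finL, finR, Fin.ext_iff]; omega) h1)

lemma spinProj_tt (i : Fin (n - 1)) : spinProj n (tt n i) = Equiv.swap (finL n i) (finR n i) :=
  spinLift_tt ..

lemma spinProj_zt : spinProj n (zt n) = 1 :=
  spinLift_zt ..

lemma ttN_of_lt {a : ℕ} (h : a < n - 1) : ttN n a = tt n ⟨a, h⟩ := dif_pos h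

lemma spinProj_ttN {a : ℕ} (h : a + 1 < n) :
    spinProj n (ttN n a) = Equiv.swap ⟨a, by omega⟩ ⟨a + 1, h⟩ := by
  rw [ttN_of_lt (by omega)]
  exact spinProj_tt _

lemma spinProj_ttilCore (i d : ℕ) (h : i + d + 1 < n) :
    spinProj n (ttilCore n i (i + d + 1)) = Equiv.swap ⟨i, by omega⟩ ⟨i + d + 1, h⟩ := by
  induction d generalizing i with
  | zero => exact (ttilCore_succ (n := n) i) ▸ spinProj_ttN h
  | succ d ih =>
    have h' := ih (i + 1) (by omega)
    have he : i + 1 + d + 1 = i + d + 2 := by omega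
    simp only [he] at h'
    change spinProj n (ttilCore n i (i + d + 2)) = Equiv.swap _ ⟨i + d + 2, h⟩
    rw [ttilCore_succ_succ, map_mul, map_mul, h', spinProj_ttN (by omega),
      swap_braid (by simp) (by simp; omega) (by simp; omega),
      Equiv.swap_mul_swap_mul_swap (by simp) (by simp; omega), Equiv.swap_comm]

lemma spinProj_ttil (a b : Fin n) : spinProj n (ttil n a b) = Equiv.swap a b := by
  have key : ∀ a b : Fin n, a < b → spinProj n (ttilCore n a b) = Equiv.swap a b := by
    intro a b hab
    obtain ⟨d, hd⟩ := Nat.exists_eq_add_of_lt (Fin.lt_def.1 hab)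
    have hb : b = ⟨a + d + 1, hd ▸ b.2⟩ := Fin.ext hd
    rw [hb]
    exact spinProj_ttilCore a d _
  rw [ttil]
  split_ifs with h
  · rw [map_mul, spinProj_zt, one_mul, key b a h, Equiv.swap_comm]
  · rcases (not_lt.1 h).eq_or_lt with h | h
    · rw [Fin.ext h, Equiv.swap_self]
      simp [ttilCore]
      rfl
    · exact key a b h

lemma eq_one_or_eq_zt_of_spinProj_eq_one (hn : 0 < n) {g : SpinSym n} (hg : spinProj n g = 1) :
    g = 1 ∨ g = zt n := by
  have hcen : ∀ k : SpinSym n, Commute k (zt n) := Subgroup.mem_center_iff.1 zt_mem_center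
  let Z := Subgroup.zpowers (zt n)
  have hZ : Z.Normal := ⟨fun w hw k => by
    obtain ⟨r, rfl⟩ := hw
    rw [(hcen k).zpow_right r |>.eq, mul_inv_cancel_right]
    exact ⟨r, rfl⟩⟩
  have hzZ : zt n ∈ Z := Subgroup.mem_zpowers _
  let π := QuotientGroup.mk' Z
  have hπz : π (zt n) = 1 := (QuotientGroup.eq_one_iff _).2 hzZ
  let φ : SpinSym n ⧸ Z →* Equiv.Perm (Fin n) := QuotientGroup.lift Z (spinProj n) (by
    rintro w ⟨r, rfl⟩
    simp [spinProj_zt])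
  have hφ : ∀ k, φ (π k) = spinProj n k := fun k => rfl
  have hgen : ∀ k, π k ∈ Subgroup.closure ((fun a => π (ttN n a)) '' Set.Iio (n - 1)) := by
    refine PresentedGroup.generated_by _ (Subgroup.comap π
      (Subgroup.closure ((fun a => π (ttN n a)) '' Set.Iio (n - 1)))) ?_
    rintro (i | ⟨⟩)
    · refine Subgroup.subset_closure ⟨i, i.2, ?_⟩
      exact congrArg π (ttN_of_lt i.2)
    · rw [Subgroup.mem_comap]
      change π (zt n) ∈ _
      rw [hπz]
      exact one_mem _
  have h1 : π g = 1 := by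
    refine eq_one_of_map_swap_eq_one (t := fun a => π (ttN n a)) (N := n - 1)
      (e := fun a => if h : a < n then (⟨a, h⟩ : Fin n) else ⟨0, hn⟩)
      ?_ ?_ ?_ ?_ φ ?_ (n - 1) le_rfl (π g) (hgen g) hg
    · intro a ha b hb hab
      simp only [Set.mem_Iic] at ha hb
      simpa [show a < n by omega, show b < n by omega] using hab
    · intro a ha
      simp only [ttN_of_lt ha]
      rw [← map_mul, tt_mul_tt, hπz]
    · intro a b hab hb
      simp only [ttN_of_lt hb, ttN_of_lt (show a < n - 1 by omega), Commute, SemiconjBy]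
      rw [← map_mul, tt_mul_tt_of_lt hab, mul_assoc, map_mul, hπz, one_mul, map_mul]
    · intro a ha
      simp only [ttN_of_lt ha, ttN_of_lt (show a < n - 1 by omega), ← map_mul]
      rw [tt_braid rfl]
    · intro a ha
      simp only [hφ, ttN_of_lt ha, spinProj_tt, show a < n by omega, show a + 1 < n by omega,
        dif_pos]
      rfl
  obtain ⟨r, rfl⟩ := (QuotientGroup.eq_one_iff _).1 h1
  have hz2 : zt n ^ (2 : ℤ) = 1 := by rw [zpow_two, zt_mul_zt]
  rcases Int.even_or_odd' r with ⟨c, rfl | rfl⟩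
  · left
    simp only [zpow_mul, hz2, one_zpow]
  · right
    simp only [zpow_add, zpow_mul, hz2, one_zpow, one_mul, zpow_one]

end Relations

/-! ### The spin representation -/

section Clifford

variable {n : ℕ}

/-- The negative definite form on `ℚⁿ` for which differences of basis vectors have value `-1`. -/
def spinForm (n : ℕ) : QuadraticForm ℚ (Fin n → ℚ) :=
  QuadraticMap.weightedSumSquares ℚ fun _ => (-1 / 2 : ℚ)

/-- The root `e_a - e_b` in the Clifford algebra. -/
def cliffRoot (a b : Fin n) : CliffordAlgebra (spinForm n) :=
  CliffordAlgebra.ι (spinForm n) (Pi.single a 1 - Pi.single b 1)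

lemma polar_spinForm_single (a b : Fin n) :
    QuadraticMap.polar (spinForm n) (Pi.single a 1) (Pi.single b 1) = if a = b then -1 else 0 := by
  have h : ∀ x y : Fin n → ℚ, QuadraticMap.polar (spinForm n) x y = - ∑ i, x i * y i := by
    intro x y
    simp only [QuadraticMap.polar, spinForm, QuadraticMap.weightedSumSquares_apply,
      ← Finset.sum_sub_distrib, ← Finset.sum_neg_distrib]
    refine Finset.sum_congr rfl fun i _ => ?_
    simp only [Pi.add_apply, smul_eq_mul]
    ring
  rw [h]
  simp only [Pi.single_apply, ite_mul, one_mul, zero_mul, Finset.sum_ite_eq', Finset.mem_univ,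
    if_true]
  split_ifs <;> simp

lemma cliffRoot_mul_add_swap (a b c d : Fin n) :
    cliffRoot a b * cliffRoot c d + cliffRoot c d * cliffRoot a b =
      algebraMap ℚ _ ((if a = c then -1 else 0) - (if b = c then -1 else 0) -
        ((if a = d then -1 else 0) - (if b = d then -1 else 0))) := by
  rw [cliffRoot, cliffRoot, CliffordAlgebra.ι_mul_ι_add_swap]
  simp only [QuadraticMap.polar_sub_left, QuadraticMap.polar_sub_right, polar_spinForm_single]

lemma cliffRoot_mul_self {a b : Fin n} (hab : a ≠ b) : cliffRoot a b * cliffRoot a b = -1 := by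
  have h : spinForm n (Pi.single a 1 - Pi.single b 1) = -1 := by
    have h := QuadraticMap.polar_self (spinForm n) (Pi.single a 1 - Pi.single b 1)
    simp only [QuadraticMap.polar_sub_left, QuadraticMap.polar_sub_right, polar_spinForm_single,
      hab, hab.symm, if_true, if_false, nsmul_eq_mul] at h
    push_cast at h
    linarith
  rw [cliffRoot, CliffordAlgebra.ι_sq_scalar, h, map_neg, map_one]

lemma cliffRoot_mul_of_disjoint {a b c d : Fin n} (hac : a ≠ c) (had : a ≠ d) (hbc : b ≠ c)
    (hbd : b ≠ d) : cliffRoot a b * cliffRoot c d = -(cliffRoot c d * cliffRoot a b) := by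
  have h := cliffRoot_mul_add_swap a b c d
  simp only [hac, had, hbc, hbd, if_false, sub_zero, map_zero] at h
  exact eq_neg_of_add_eq_zero_left h

lemma cliffRoot_swap (a b : Fin n) : cliffRoot b a = -cliffRoot a b := by
  rw [cliffRoot, cliffRoot, ← map_neg, neg_sub]

lemma cliffRoot_add (a b c : Fin n) : cliffRoot a b + cliffRoot b c = cliffRoot a c := by
  rw [cliffRoot, cliffRoot, cliffRoot, ← map_add, sub_add_sub_cancel]

lemma cliffRoot_mul_mul {a b c : Fin n} (hab : a ≠ b) (hac : a ≠ c) (hbc : b ≠ c) :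
    cliffRoot a b * cliffRoot b c * cliffRoot a b = cliffRoot a c := by
  have h := cliffRoot_mul_add_swap a b b c
  simp only [hab, hac, hbc, if_true, if_false] at h
  norm_num at h
  rw [eq_sub_of_add_eq h, sub_mul, mul_assoc, cliffRoot_mul_self hab, one_mul, mul_neg, mul_one,
    sub_neg_eq_add, cliffRoot_add]

lemma cliffRoot_mul_mul' {a b c : Fin n} (hab : a ≠ b) (hac : a ≠ c) (hbc : b ≠ c) :
    cliffRoot b c * cliffRoot a b * cliffRoot b c = cliffRoot a c := by
  rw [cliffRoot_swap c b, cliffRoot_swap b a, neg_mul_neg, mul_neg,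
    cliffRoot_mul_mul hbc.symm hac.symm hab.symm, ← cliffRoot_swap]

/-- The root `e_a - e_b` as a unit of the Clifford algebra. -/
def cliffRootUnit (a b : Fin n) (hab : a ≠ b) : (CliffordAlgebra (spinForm n))ˣ where
  val := cliffRoot a b
  inv := -cliffRoot a b
  val_inv := by rw [mul_neg, cliffRoot_mul_self hab, neg_neg]
  inv_val := by rw [neg_mul, cliffRoot_mul_self hab, neg_neg]

/-- The spin representation of `S̃ₙ` in the Clifford algebra. -/
def spinRep (n : ℕ) : SpinSym n →* (CliffordAlgebra (spinForm n))ˣ :=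
  spinLift (fun i => cliffRootUnit (finL n i) (finR n i) (finL_ne_finR i)) (-1) (by simp)
    (by simp) (fun i => Units.ext (cliffRoot_mul_self (finL_ne_finR i)))
    (by
      intro i j h
      rw [lt_abs] at h
      refine Units.ext ?_
      have h' := cliffRoot_mul_of_disjoint (a := finL n i) (b := finR n i) (c := finL n j)
        (d := finR n j) (by simp [finL, Fin.ext_iff]; omega)
        (by simp [finL, finR, Fin.ext_iff]; omega) (by simp [finL, finR, Fin.ext_iff]; omega)
        (by simp [finR, Fin.ext_iff]; omega)
      simpa [cliffRootUnit] using h')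
    (by
      intro i j h
      refine Units.ext ?_
      have hij : finL n j = finR n i := Fin.ext h
      have h1 := finL_ne_finR j
      have h2 : finL n i ≠ finR n j := by simp [finL, finR, Fin.ext_iff]; omega
      simp only [cliffRootUnit, Units.val_mul]
      rw [hij] at h1 ⊢
      rw [cliffRoot_mul_mul (finL_ne_finR i) h2 h1, cliffRoot_mul_mul' (finL_ne_finR i) h2 h1])

lemma spinRep_zt : spinRep n (zt n) = -1 := spinLift_zt ..

lemma spinRep_ttN {a : ℕ} (h : a + 1 < n) :
    (spinRep n (ttN n a)).val = cliffRoot ⟨a, by omega⟩ ⟨a + 1, h⟩ := by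
  rw [ttN_of_lt (by omega)]
  exact congrArg Units.val (spinLift_tt ..)

lemma spinRep_ttilCore (i d : ℕ) (h : i + d + 1 < n) :
    (spinRep n (ttilCore n i (i + d + 1))).val =
      cliffRoot ⟨i, by omega⟩ ⟨i + d + 1, h⟩ := by
  induction d generalizing i with
  | zero => exact (ttilCore_succ (n := n) i) ▸ spinRep_ttN h
  | succ d ih =>
    have h' := ih (i + 1) (by omega)
    have he : i + 1 + d + 1 = i + d + 2 := by omega
    simp only [he] at h'
    change (spinRep n (ttilCore n i (i + d + 2))).val = cliffRoot _ ⟨i + d + 2, h⟩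
    rw [ttilCore_succ_succ, map_mul, map_mul, Units.val_mul, Units.val_mul,
      spinRep_ttN (by omega), h', cliffRoot_mul_mul (by simp) (by simp; omega) (by simp; omega)]

lemma spinRep_ttil {a b : Fin n} (hab : a ≠ b) :
    (spinRep n (ttil n a b)).val = cliffRoot a b := by
  have key : ∀ a b : Fin n, a < b → (spinRep n (ttilCore n a b)).val = cliffRoot a b := by
    intro a b hab
    obtain ⟨d, hd⟩ := Nat.exists_eq_add_of_lt (Fin.lt_def.1 hab)
    have hb : b = ⟨a + d + 1, hd ▸ b.2⟩ := Fin.ext hd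
    rw [hb]
    exact spinRep_ttilCore a d _
  rw [ttil]
  split_ifs with h
  · rw [map_mul, spinRep_zt, Units.val_mul, key b a h, Units.val_neg, Units.val_one, neg_one_mul,
      ← cliffRoot_swap]
  · exact key a b (lt_of_le_of_ne (not_lt.1 h) hab)

lemma spinRep_zt_ne_one : spinRep n (zt n) ≠ 1 := by
  intro h
  have h1 := congrArg Units.val h
  rw [spinRep_zt, Units.val_neg, Units.val_one] at h1
  have : Nontrivial (CliffordAlgebra (spinForm n)) := inferInstance
  have h2 : algebraMap ℚ (CliffordAlgebra (spinForm n)) (-1) = algebraMap ℚ _ 1 := by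
    rw [map_neg, map_one, h1]
  have h3 := (algebraMap ℚ (CliffordAlgebra (spinForm n))).injective h2
  norm_num at h3

lemma zt_ne_one : zt n ≠ 1 := fun h => spinRep_zt_ne_one (by rw [h, map_one])

/-- Lifts of disjoint transpositions anticommute. -/
lemma ttil_mul_ttil_of_disjoint {a b c d : Fin n} (hab : a ≠ b) (hcd : c ≠ d) (hac : a ≠ c)
    (had : a ≠ d) (hbc : b ≠ c) (hbd : b ≠ d) :
    ttil n a b * ttil n c d = zt n * (ttil n c d * ttil n a b) := by
  have hp : spinProj n (ttil n a b * ttil n c d * (ttil n c d * ttil n a b)⁻¹) = 1 := by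
    rw [map_mul, map_inv, mul_inv_eq_one, map_mul, map_mul, spinProj_ttil, spinProj_ttil]
    refine (Equiv.Perm.Disjoint.commute ?_).eq
    rw [Equiv.Perm.disjoint_iff_disjoint_support, Equiv.Perm.support_swap hab,
      Equiv.Perm.support_swap hcd]
    simp [hac.symm, had.symm, hbc.symm, hbd.symm]
  have hr : spinRep n (ttil n a b * ttil n c d) =
      spinRep n (zt n * (ttil n c d * ttil n a b)) := by
    refine Units.ext ?_
    simp only [map_mul, Units.val_mul, spinRep_ttil hab, spinRep_ttil hcd, spinRep_zt]
    rw [cliffRoot_mul_of_disjoint hac had hbc hbd]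
    simp
  rcases eq_one_or_eq_zt_of_spinProj_eq_one a.pos hp with h | h
  · rw [mul_inv_eq_one] at h
    rw [h, map_mul _ (zt n), right_eq_mul] at hr
    exact absurd hr spinRep_zt_ne_one
  · exact mul_inv_eq_iff_eq_mul.1 h

end Clifford

/-! ### The section and the cocycle -/

/-- Replacing a trailing trivial factor of an ordered product multiplies the product on the
right. -/
lemma prod_map_update {ι M : Type*} [Preorder ι] [DecidableEq ι] [Monoid M] (f : ι → M) (m : ι)
    (g : M) (l : List ι) (hl : l.Pairwise (· < ·)) (hm : m ∈ l) (hf : ∀ k, m ≤ k → f k = 1) :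
    (l.map (Function.update f m g)).prod = (l.map f).prod * g := by
  induction l with
  | nil => simp at hm
  | cons a l ih =>
    rw [List.pairwise_cons] at hl
    rw [List.map_cons, List.map_cons, List.prod_cons, List.prod_cons]
    by_cases ham : a = m
    · subst ham
      have h1 : ∀ k ∈ l, Function.update f a g k = 1 := fun k hk => by
        rw [Function.update_of_ne (hl.1 k hk).ne', hf k (hl.1 k hk).le]
      have h2 : ∀ k ∈ l, f k = 1 := fun k hk => hf k (hl.1 k hk).le
      rw [List.prod_eq_one (by simpa using h1), List.prod_eq_one (by simpa using h2)]
      simp [hf a le_rfl]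
    · rw [Function.update_of_ne ham, ih hl.2 (by simpa [Ne.symm ham] using hm), mul_assoc]

section Cocycle

variable {n : ℕ}

lemma exists_isFactorization (x : Equiv.Perm (Fin n)) : ∃ i, IsFactorization n x i := by
  suffices H : ∀ m ≤ n, ∀ x : Equiv.Perm (Fin n), (∀ k : Fin n, m ≤ k → x k = k) →
      ∃ i, IsFactorization n x i ∧ ∀ k : Fin n, m ≤ k → i k = k by
    obtain ⟨i, hi, -⟩ := H n le_rfl x fun k hk => absurd k.2 (not_lt.2 hk)
    exact ⟨i, hi⟩
  intro m
  induction m with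
  | zero =>
    intro _ x hx
    refine ⟨id, ⟨fun k => le_rfl, ?_⟩, fun k _ => rfl⟩
    obtain rfl : x = 1 := Equiv.ext fun k => hx k (Nat.zero_le _)
    rw [List.prod_eq_one]
    simp [Equiv.Perm.one_def]
  | succ m ih =>
    intro hm x hx
    let M : Fin n := ⟨m, hm⟩
    let p : Fin n := x⁻¹ M
    have hxp : x p = M := x.apply_symm_apply M
    have hp : p ≤ M := by
      by_contra hlt
      have h1 := hx p (Fin.lt_def.1 (not_le.1 hlt))
      exact hlt (by rw [← h1, hxp])
    obtain ⟨i, ⟨hi, hprod⟩, hfix⟩ := ih (by omega) (x * Equiv.swap p M) (by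
      intro k hk
      rcases hk.eq_or_lt with hk | hk
      · obtain rfl : k = M := Fin.ext hk.symm
        rw [Equiv.Perm.mul_apply, Equiv.swap_apply_right, hxp]
      · have hkM : M < k := hk
        rw [Equiv.Perm.mul_apply,
          Equiv.swap_apply_of_ne_of_ne (hp.trans_lt hkM).ne' hkM.ne', hx k hk])
    refine ⟨Function.update i M p, ⟨fun k => ?_, ?_⟩, fun k hk => ?_⟩
    · by_cases hk : k = M
      · subst hk
        simpa using hp
      · simpa [hk] using hi k
    · have hfun : (fun k => Equiv.swap (Function.update i M p k) k) =
          Function.update (fun k => Equiv.swap (i k) k) M (Equiv.swap p M) := by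
        ext1 k
        by_cases hk : k = M
        · subst hk
          simp
        · simp [hk]
      rw [hfun, prod_map_update _ _ _ _ (List.pairwise_lt_finRange n) (List.mem_finRange M),
        ← hprod, mul_assoc, Equiv.swap_mul_self, mul_one]
      intro k hk
      rw [hfix k hk, Equiv.swap_self]
      rfl
    · have hkM : k ≠ M := fun h => by
        rw [h] at hk
        exact absurd hk (by simp [M])
      rw [Function.update_of_ne hkM, hfix k (by omega)]

lemma spinProj_sec (x : Equiv.Perm (Fin n)) : spinProj n (sec n x) = x := by
  have h := exists_isFactorization x
  rw [sec, dif_pos h, map_list_prod, List.map_map]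
  conv_rhs => rw [h.choose_spec.2]
  congr 2
  ext1 k
  exact spinProj_ttil _ _

/-- Elements of `S̃ₙ` with the same image in `Sₙ` differ at most by `z`. -/
lemma eq_or_eq_zt_mul (hn : 0 < n) {g h : SpinSym n} (hgh : spinProj n g = spinProj n h) :
    g = h ∨ g = zt n * h := by
  have h1 : spinProj n (g * h⁻¹) = 1 := by rw [map_mul, map_inv, hgh, mul_inv_cancel]
  simpa only [mul_inv_eq_iff_eq_mul, one_mul] using
    eq_one_or_eq_zt_of_spinProj_eq_one hn h1

/-- Sections of disjoint transpositions anticommute. -/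
lemma sec_swap_mul_sec_swap {a b c d : Fin n} (hab : a ≠ b) (hcd : c ≠ d) (hac : a ≠ c)
    (had : a ≠ d) (hbc : b ≠ c) (hbd : b ≠ d) :
    sec n (Equiv.swap a b) * sec n (Equiv.swap c d) =
      zt n * (sec n (Equiv.swap c d) * sec n (Equiv.swap a b)) := by
  have hcen : ∀ k : SpinSym n, k * zt n = zt n * k := Subgroup.mem_center_iff.1 zt_mem_center
  have hsec : ∀ p q : Fin n, sec n (Equiv.swap p q) = ttil n p q ∨
      sec n (Equiv.swap p q) = zt n * ttil n p q := fun p q =>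
    eq_or_eq_zt_mul p.pos (by rw [spinProj_sec, spinProj_ttil])
  have hanti := ttil_mul_ttil_of_disjoint hab hcd hac had hbc hbd
  have hl : ∀ u v : SpinSym n, u * (zt n * v) = zt n * (u * v) := fun u v => by
    rw [← mul_assoc, hcen, mul_assoc]
  rcases hsec a b with h1 | h1 <;> rcases hsec c d with h2 | h2 <;>
    simp only [h1, h2, mul_assoc, hl, hanti]

lemma sec_mul_sec (hn : 0 < n) (x y : Equiv.Perm (Fin n)) :
    sec n x * sec n y = zt n ^ (coc n x y).val * sec n (x * y) := by
  rw [coc]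
  split_ifs with h
  · simp [h]
  · have h1 := eq_or_eq_zt_mul hn (g := sec n x * sec n y) (h := sec n (x * y))
      (by simp only [map_mul, spinProj_sec])
    simpa [ZMod.val_one] using h1.resolve_left h

lemma zt_pow_eq_zt_pow_iff (a b : ℕ) : zt n ^ a = zt n ^ b ↔ (a : ZMod 2) = b := by
  have ho : orderOf (zt n) = 2 := orderOf_eq_prime (by rw [pow_two, zt_mul_zt]) zt_ne_one
  rw [pow_eq_pow_iff_modEq, ho, ZMod.natCast_eq_natCast_iff]

end Cocycle

theorem cocycle_square_rule (n : ℕ) (hn : 2 ≤ n) (i j k l : Fin n)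
    (hij : i ≠ j) (hkl : k ≠ l)
    (hik : i ≠ k) (hil : i ≠ l) (hjk : j ≠ k) (hjl : j ≠ l)
    (x : Equiv.Perm (Fin n)) :
    coc n (Equiv.swap i j) x + coc n (Equiv.swap i j) (Equiv.swap k l * x) +
      coc n (Equiv.swap k l) x + coc n (Equiv.swap k l) (Equiv.swap i j * x) = 1 := by
  have hcen : ∀ w : SpinSym n, Commute w (zt n) := Subgroup.mem_center_iff.1 zt_mem_center
  have key : ∀ p q : Equiv.Perm (Fin n), sec n p * sec n q * sec n x =
      zt n ^ ((coc n q x).val + (coc n p (q * x)).val) * sec n (p * q * x) := by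
    intro p q
    rw [mul_assoc, sec_mul_sec (by omega) q x, ← mul_assoc, ((hcen _).pow_right _).eq, mul_assoc,
      sec_mul_sec (by omega) p (q * x), ← mul_assoc, ← pow_add, mul_assoc p q x]
  have hswap : Equiv.swap i j * Equiv.swap k l = Equiv.swap k l * Equiv.swap i j := by
    have h := congrArg (spinProj n) (sec_swap_mul_sec_swap hij hkl hik hil hjk hjl)
    simpa only [map_mul, spinProj_sec, spinProj_zt, one_mul] using h
  have h := key (Equiv.swap i j) (Equiv.swap k l)
  rw [sec_swap_mul_sec_swap hij hkl hik hil hjk hjl, mul_assoc, key, ← mul_assoc, ← pow_succ',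
    hswap, mul_left_inj, zt_pow_eq_zt_pow_iff] at h
  push_cast at h
  simp only [ZMod.natCast_zmod_val] at h
  have h2 : ∀ a b c d : ZMod 2, a + b + 1 = c + d → a + d + c + b = 1 := by decide
  exact h2 _ _ _ _ h
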